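/- Let k be an algebraically closed field of characteristic ≠ 2 and let n ≥ 1, r ≥ 2 be integers. Consider the polynomial map φ from (Symm_n(k))^{r+1} to the k-vector space of homogeneous polynomials of degree n in the variables x_0,…,x_r, sending (A_0,…,A_r) to det(x_0 A_0 + … + x_r A_r). Then the Zariski closure of the image of φ (the affine cone over the locus SDHyp_{r,n} of symmetric determinantal hypersurfaces) has dimension (r − 1)·n(n+1)/2 + n + 1; equivalently, the locus SDHyp_{r,n} of symmetric determinantal hypersurfaces of degree n in P^r has dimension (r − 1)·n(n+1)/2 + n inside the projective space Hyp_{r,n} ≅ P^{\binom{r+n}{n}−1} of degree-n hypersurfaces. -/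

import Mathlib

/-!
The coordinate ring of the closure of the image is an affine domain over `k` (the vanishing ideal is
the kernel of evaluation at the generic symmetric tuple, `ker_sdhypConeCoordEval`), so its Krull
dimension is its transcendence degree (`ringKrullDim_eq_of_trdeg`).  Write `r = q + 1` and let
`SliceCoord n q` index the coordinates of the slice of forms `c · det(∑ x_i A_i)` with `A_0 = 1`,
`A_1` diagonal and `A_2, …, A_r` symmetric; it has `q n(n+1)/2 + n + 1` elements.

*Upper bound* (`trdeg_range_coeffHom_le`).  The generic pencil `A_0, A_1` is regular with distinct
eigenvalues, since it specializes to `1, diagonal t`.  Over an algebraically closed field it is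
brought to the form `1, diagonal l` by a congruence `A_i ↦ Vᵀ A_i V`, which only multiplies the
determinant by the constant `(det V)²`.  So the coefficients of the generic determinantal form are
polynomials in `#(SliceCoord n q)` elements.

*Lower bound* (`le_trdeg_range_coeffHom`).  The tuple `(1, diagonal t, diagonal t⁻¹, …)` gives the
product of the `n` hyperplanes `x_0 + t_p x_1 + t_p⁻¹ (x_2 + … + x_r) = 0`.  It is deformed with a
parameter `E`, to order `E` off the diagonal and to order `E²` on the diagonal, by all the slice
coordinates (`deformation`).  The value of the deformed form at a point lying on two of the
hyperplanes is `E²` times a constant multiple of the square of an off-diagonal coordinate, up to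
higher order; at a point lying on one hyperplane it is `E²` times an affine function of a
diagonal coordinate with coefficients in the previous ones (`det_perturbed_node`,
`det_perturbed_line`, `exists_recover`).  So the ring generated by all coordinates is integral over
the lowest-order terms, which are therefore algebraically independent, and then so are the values
themselves (`algebraicIndependent_of_lowest`).
-/

open Matrix

/-- The generalized characteristic polynomial
`P_A(x_0, …, x_r) = det(x_0 A_0 + … + x_r A_r)` of an `(r+1)`-tuple of `n × n` matrices. -/
noncomputable def genCharPoly {k : Type*} [CommRing k] {n r : ℕ}
    (A : Fin (r + 1) → Matrix (Fin n) (Fin n) k) : MvPolynomial (Fin (r + 1)) k :=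
  Matrix.det (∑ i : Fin (r + 1), (MvPolynomial.X i : MvPolynomial (Fin (r + 1)) k) •
    ((A i).map MvPolynomial.C : Matrix (Fin n) (Fin n) (MvPolynomial (Fin (r + 1)) k)))

/-- Evaluation of polynomial functions on the space of homogeneous degree-`n` forms in
`x_0, …, x_r` (with coordinates indexed by the monomials of degree `n`) at the points
`φ(A) = det(x_0 A_0 + … + x_r A_r)`, where `A` ranges over the `(r+1)`-tuples of symmetric
`n × n` matrices.  Its kernel is the vanishing ideal of the image of `φ`, so the quotient by
the kernel is the coordinate ring of the Zariski closure of the image of `φ`, i.e. of the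
affine cone over `SDHyp_{r,n}`. -/
noncomputable def sdhypConeCoordEval (k : Type*) [Field k] (n r : ℕ) :
    MvPolynomial {d : Fin (r + 1) →₀ ℕ // (d.sum fun _ e => e) = n} k →+*
      ({A : Fin (r + 1) → Matrix (Fin n) (Fin n) k // ∀ i, (A i).IsSymm} → k) :=
  Pi.ringHom fun A =>
    MvPolynomial.eval fun d => MvPolynomial.coeff d.1 (genCharPoly A.1)

universe u

/-! ### Krull dimension and algebraic independence -/

/-- An integral injective ring extension preserves Krull dimension. -/
theorem ringKrullDim_eq_of_integral {R S : Type*} [CommRing R] [CommRing S] [Algebra R S]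
    [FaithfulSMul R S] [Algebra.IsIntegral R S] : ringKrullDim R = ringKrullDim S := by
  apply le_antisymm
  · refine iSup_le fun l => ?_
    obtain ⟨Q, -, hQ, hQP⟩ := Ideal.exists_ideal_over_prime_of_isIntegral
      (S := S) l.head.asIdeal ⊥ (by
        rw [← RingHom.ker_eq_comap_bot,
          (RingHom.injective_iff_ker_eq_bot _).1 (FaithfulSMul.algebraMap_injective R S)]
        exact bot_le)
    have : Q.LiesOver l.head.asIdeal := ⟨hQP.symm⟩
    obtain ⟨L, hL, -⟩ := Ideal.exists_ltSeries_of_hasGoingUp l Q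
    rw [← hL]
    exact Order.LTSeries.length_le_krullDim L
  · refine Order.krullDim_le_of_strictMono (PrimeSpectrum.comap (algebraMap R S)) ?_
    intro P Q h
    have h' : P.asIdeal < Q.asIdeal := h
    obtain ⟨hle, x, hxQ, hxP⟩ := SetLike.lt_iff_le_and_exists.1 h'
    exact Ideal.comap_lt_comap_of_integral_mem_sdiff hle ⟨hxQ, hxP⟩ (Algebra.IsIntegral.isIntegral x)

/-- The Krull dimension of an affine domain over a field is its transcendence degree, by Noether
normalization. -/
theorem ringKrullDim_eq_of_trdeg (k : Type*) {R : Type*} [Field k] [CommRing R] [IsDomain R]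
    [Algebra k R] [Algebra.FiniteType k R] (m : ℕ) (h : Algebra.trdeg k R = m) :
    ringKrullDim R = m := by
  obtain ⟨s, g, hinj, hintg⟩ := exists_integral_inj_algHom_of_fg k R
  algebraize [g.toRingHom]
  have : IsScalarTower k (MvPolynomial (Fin s) k) R := IsScalarTower.of_algHom g
  have : FaithfulSMul (MvPolynomial (Fin s) k) R :=
    (faithfulSMul_iff_algebraMap_injective _ _).2 hinj
  have : Algebra.IsIntegral (MvPolynomial (Fin s) k) R := ⟨hintg⟩
  rw [← ringKrullDim_eq_of_integral (R := MvPolynomial (Fin s) k) (S := R),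
    MvPolynomial.ringKrullDim_of_isNoetherianRing, ringKrullDim_eq_zero_of_field]
  have h1 := lift_trdeg_add_eq k (MvPolynomial (Fin s) k) R
  rw [trdeg_eq_zero (R := MvPolynomial (Fin s) k) (A := R), h, MvPolynomial.trdeg_of_isDomain] at h1
  have : s = m := by simpa using h1
  simp [this]

/-- Elements `v_j + E² w_j`, with constants `v_j` and `E = Polynomial.X`, are algebraically
independent as soon as the lowest-order terms `w_j mod E` are. -/
theorem algebraicIndependent_of_lowest {k S J : Type*} [Field k] [CommRing S] [Algebra k S]
    (v : J → k) (w : J → Polynomial S)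
    (h : AlgebraicIndependent k fun j => (w j).coeff 0) :
    AlgebraicIndependent k fun j =>
      algebraMap k (Polynomial S) (v j) + Polynomial.X ^ 2 * w j := by
  rw [algebraicIndependent_iff]
  intro F hF
  -- Translating by the constants `v j` reduces to the elements `E² w_j`, for which the homogeneous
  -- component of degree `i` of a relation contributes to order at least `2 * i` in `E`.
  let τ : MvPolynomial J k →ₐ[k] MvPolynomial J k :=
    MvPolynomial.aeval fun j => MvPolynomial.C (v j) + MvPolynomial.X j
  let τ' : MvPolynomial J k →ₐ[k] MvPolynomial J k :=
    MvPolynomial.aeval fun j => MvPolynomial.X j - MvPolynomial.C (v j)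
  have hτ : τ' (τ F) = F := by
    have : τ'.comp τ = AlgHom.id k _ := by
      ext j; simp [τ, τ']
    exact DFunLike.congr_fun this F
  suffices τ F = 0 by rw [← hτ, this, map_zero]
  set G := τ F with hG
  have hG0 : MvPolynomial.aeval (fun j => Polynomial.X ^ 2 * w j) G = 0 := by
    have : (MvPolynomial.aeval (fun j => Polynomial.X ^ 2 * w j)).comp τ =
       MvPolynomial.aeval (R := k) (fun j =>
      algebraMap k (Polynomial S) (v j) + Polynomial.X ^ 2 * w j) := by
      ext j; simp [τ]
    rw [hG, ← AlgHom.comp_apply, this, hF]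
  have hscale : ∀ i, MvPolynomial.aeval (fun j => Polynomial.X ^ 2 * w j)
      (MvPolynomial.homogeneousComponent i G) =
      Polynomial.X ^ (2 * i) * MvPolynomial.aeval w (MvPolynomial.homogeneousComponent i G) := by
    intro i
    have hh := MvPolynomial.homogeneousComponent_isHomogeneous i G
    simp only [MvPolynomial.aeval_def, MvPolynomial.eval₂_eq, Finset.mul_sum]
    refine Finset.sum_congr rfl fun d hd => ?_
    have hd' : ∑ j ∈ d.support, d j = i := by
      have := hh (MvPolynomial.mem_support_iff.1 hd)
      simpa [Finsupp.weight_apply, Finsupp.sum] using this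
    simp only [mul_pow, Finset.prod_mul_distrib, ← pow_mul]
    rw [Finset.prod_pow_eq_pow_sum, ← Finset.mul_sum, hd']
    ring
  have hcoeff : ∀ p : MvPolynomial J k, (MvPolynomial.aeval w p).coeff 0 =
      MvPolynomial.aeval (fun j => (w j).coeff 0) p := by
    intro p
    have : ((Polynomial.aeval (0:S)).restrictScalars k).comp (MvPolynomial.aeval w) =
       MvPolynomial.aeval (R := k) (fun j => (w j).coeff 0) := by
      ext j; simp [Polynomial.coeff_zero_eq_aeval_zero]
    rw [← this, Polynomial.coeff_zero_eq_aeval_zero]; rfl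
  have hcomp : ∀ i, MvPolynomial.homogeneousComponent i G = 0 := by
    intro i
    induction i using Nat.strong_induction_on with
    | _ i ih =>
    rw [← MvPolynomial.sum_homogeneousComponent G, map_sum] at hG0
    by_cases hi : i ∈ Finset.range (G.totalDegree + 1)
    swap
    · exact MvPolynomial.homogeneousComponent_eq_zero _ _ (by simpa using hi)
    have h2 := congrArg (fun q => Polynomial.coeff q (2 * i)) hG0
    simp only [hscale, Polynomial.finsetSum_coeff, Polynomial.coeff_zero] at h2
    rw [Finset.sum_eq_single i] at h2
    · rw [Polynomial.coeff_X_pow_mul', if_pos le_rfl, Nat.sub_self, hcoeff] at h2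
      exact (algebraicIndependent_iff.1 h) _ h2
    · intro b _ hb
      rcases lt_or_gt_of_ne hb with hb | hb
      · rw [ih b hb]; simp
      · rw [Polynomial.coeff_X_pow_mul', if_neg (by omega)]
    · intro h; exact absurd hi h
  rw [← MvPolynomial.sum_homogeneousComponent G]
  exact Finset.sum_eq_zero fun i _ => hcomp i

/-! ### Diagonalization of pencils -/

/-- If a specialization of `f` without loss of degree is separable, then `f` is separable over
every field containing `T`: the resultant of `f` and its derivative does not vanish. -/
theorem separable_of_specialization {T k K : Type*} [CommRing T] [Field k] [Field K]
    (φ : T →+* k) (ι : T →+* K) (hι : Function.Injective ι) (f : Polynomial T) {n : ℕ}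
    (hn : n ≠ 0) (hf : f.natDegree ≤ n) (hdeg : (f.map φ).natDegree = n)
    (hsep : (f.map φ).Separable) : (f.map ι).Separable := by
  have hd : f.derivative.natDegree ≤ n := (Polynomial.natDegree_derivative_le f).trans (by omega)
  have hres : f.resultant f.derivative n n ≠ 0 := by
    intro h0
    have h1 : (f.map φ).resultant (f.derivative.map φ) n n = 0 := by
      rw [Polynomial.resultant_map_map, h0, map_zero]
    have hle : (f.derivative.map φ).natDegree ≤ n := Polynomial.natDegree_map_le.trans hd
    obtain ⟨c, hc⟩ := Nat.exists_eq_add_of_le hle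
    nth_rw 2 [hc] at h1
    rw [Polynomial.resultant_add_right_deg _ _ _ _ _ le_rfl] at h1
    have hlead : (f.map φ).coeff n ≠ 0 := by
      rw [← hdeg, Polynomial.coeff_natDegree, Polynomial.leadingCoeff_ne_zero]
      exact hsep.ne_zero
    have h2 := (mul_eq_zero.1 h1).resolve_left (pow_ne_zero _ hlead)
    rw [← hdeg, ← Polynomial.derivative_map] at h2
    exact (Polynomial.resultant_eq_zero_iff.1 h2).2 hsep
  obtain ⟨p, q, -, -, hpq⟩ :=
    Polynomial.exists_mul_add_mul_eq_C_resultant f f.derivative hf hd (Or.inl hn)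
  have h3 := congrArg (Polynomial.map ι) hpq
  simp only [Polynomial.map_add, Polynomial.map_mul, Polynomial.map_C] at h3
  have hu : IsUnit (Polynomial.C (ι (f.resultant f.derivative n n))) :=
    Polynomial.isUnit_C.2 (isUnit_iff_ne_zero.2 (by
      rwa [Ne, map_eq_zero_iff ι hι]))
  obtain ⟨u, hu⟩ := hu
  rw [← hu] at h3
  rw [Polynomial.separable_def]
  refine ⟨↑u⁻¹ * p.map ι, ↑u⁻¹ * q.map ι, ?_⟩
  rw [Polynomial.derivative_map]
  have : (↑u⁻¹ : Polynomial K) * ↑u = 1 := by simp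
  rw [← this, ← h3]; ring

/-- A regular pencil of quadratic forms with distinct eigenvalues is diagonalized by a congruence:
eigenvectors of `A⁻¹ B` are orthogonal for both forms and can be normalized for `A`. -/
theorem exists_simultaneous_diagonalization {K : Type*} [Field K] [IsAlgClosed K] {n : ℕ}
    (A B : Matrix (Fin n) (Fin n) K) (hA : A.IsSymm) (hB : B.IsSymm) (hdet : A.det ≠ 0)
    (hsep : (det ((Polynomial.X : Polynomial K) • A.map Polynomial.C +
      (-B).map Polynomial.C)).Separable) :
    ∃ (V : Matrix (Fin n) (Fin n) K) (l : Fin n → K),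
      Vᵀ * A * V = 1 ∧ Vᵀ * B * V = diagonal l := by
  classical
  set f := det ((Polynomial.X : Polynomial K) • A.map Polynomial.C + (-B).map Polynomial.C) with hf
  have hdeg : f.natDegree = n := by
    have h1 : f.natDegree ≤ n := by
      simpa using Polynomial.natDegree_det_X_add_C_le A (-B)
    refine le_antisymm h1 (Polynomial.le_natDegree_of_ne_zero ?_)
    have := Polynomial.coeff_det_X_add_C_card A (-B)
    rw [Fintype.card_fin] at this
    rwa [hf, this]
  have hcard : f.roots.toFinset.card = n := by
    rw [Multiset.toFinset_card_of_nodup (Polynomial.nodup_roots hsep),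
      ← (IsAlgClosed.splits f).natDegree_eq_card_roots, hdeg]
  let e := (Finset.equivFinOfCardEq hcard).symm
  let l : Fin n → K := fun p => (e p : K)
  have hl : Function.Injective l := Subtype.val_injective.comp e.injective
  have hroot : ∀ p, (l p • A - B).det = 0 := by
    intro p
    have h1 : f.IsRoot (l p) := by
      have := (e p).2
      rw [Multiset.mem_toFinset] at this
      exact (Polynomial.mem_roots'.1 this).2
    have h2 := h1.eq_zero
    rw [hf, ← Polynomial.coe_evalRingHom, RingHom.map_det] at h2
    rw [← h2]
    congr 1
    ext i j
    simp [sub_eq_add_neg]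
    exact mul_comm _ _
  have hv : ∀ p, ∃ v : Fin n → K, v ≠ 0 ∧ (l p • A - B) *ᵥ v = 0 := fun p =>
    Matrix.exists_mulVec_eq_zero_iff.2 (hroot p)
  choose v hv0 hv using hv
  have hBv : ∀ p, B *ᵥ v p = l p • (A *ᵥ v p) := by
    intro p
    have := hv p
    rw [Matrix.sub_mulVec, sub_eq_zero, Matrix.smul_mulVec] at this
    exact this.symm
  have hli : LinearIndependent K v := by
    refine Module.End.eigenvectors_linearIndependent' (Matrix.toLin' (A⁻¹ * B)) l hl v fun p => ?_
    refine Module.End.hasEigenvector_iff.2 ⟨?_, hv0 p⟩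
    rw [Module.End.mem_eigenspace_iff, Matrix.toLin'_apply, ← Matrix.mulVec_mulVec, hBv,
      Matrix.mulVec_smul, Matrix.mulVec_mulVec, Matrix.nonsing_inv_mul _ (isUnit_iff_ne_zero.2 hdet),
      Matrix.one_mulVec]
  let V : Matrix (Fin n) (Fin n) K := (Matrix.of v)ᵀ
  have hV : V.det ≠ 0 := by
    rw [Matrix.det_transpose]
    have := (Matrix.linearIndependent_rows_iff_isUnit (A := Matrix.of v)).1 hli
    exact isUnit_iff_ne_zero.1 ((Matrix.isUnit_iff_isUnit_det _).1 this)
  have hentry : ∀ (M : Matrix (Fin n) (Fin n) K) p q, (Vᵀ * M * V) p q = v p ⬝ᵥ (M *ᵥ v q) := by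
    intro M p q
    rw [Matrix.mul_assoc, Matrix.mul_apply]
    rfl
  have hsymm : ∀ p q, v p ⬝ᵥ (A *ᵥ v q) = v q ⬝ᵥ (A *ᵥ v p) := by
    intro p q
    rw [Matrix.dotProduct_mulVec, ← Matrix.mulVec_transpose, hA.eq, dotProduct_comm]
  have hsymmB : ∀ p q, v p ⬝ᵥ (B *ᵥ v q) = v q ⬝ᵥ (B *ᵥ v p) := by
    intro p q
    rw [Matrix.dotProduct_mulVec, ← Matrix.mulVec_transpose, hB.eq, dotProduct_comm]
  have horth : ∀ p q, p ≠ q → v p ⬝ᵥ (A *ᵥ v q) = 0 := by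
    intro p q hpq
    have h1 := hsymmB p q
    rw [hBv, hBv, dotProduct_smul, dotProduct_smul, hsymm q p, smul_eq_mul, smul_eq_mul,
      ← sub_eq_zero, ← sub_mul] at h1
    exact (mul_eq_zero.1 h1).resolve_left (sub_ne_zero.2 fun h => hpq (hl h).symm)
  let g : Fin n → K := fun p => v p ⬝ᵥ (A *ᵥ v p)
  have hG : Vᵀ * A * V = diagonal g := by
    ext p q
    rw [hentry, Matrix.diagonal_apply]
    split_ifs with h
    · subst h; rfl
    · exact horth p q h
  have hg : ∀ p, g p ≠ 0 := by
    have h1 : (Vᵀ * A * V).det ≠ 0 := by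
      rw [det_mul, det_mul, det_transpose]
      exact mul_ne_zero (mul_ne_zero hV hdet) hV
    rw [hG, det_diagonal, Finset.prod_ne_zero_iff] at h1
    exact fun p => h1 p (Finset.mem_univ _)
  have hs : ∀ p, ∃ z : K, g p * z ^ 2 = 1 := by
    intro p
    obtain ⟨z, hz⟩ := IsAlgClosed.exists_pow_nat_eq (g p)⁻¹ (n := 2) (by norm_num)
    exact ⟨z, by rw [hz, mul_inv_cancel₀ (hg p)]⟩
  choose z hz using hs
  refine ⟨V * diagonal z, l, ?_, ?_⟩
  · rw [transpose_mul, diagonal_transpose,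
      show diagonal z * Vᵀ * A * (V * diagonal z) = diagonal z * (Vᵀ * A * V) * diagonal z by
        simp only [Matrix.mul_assoc], hG, diagonal_mul_diagonal, diagonal_mul_diagonal,
        ← diagonal_one]
    congr 1; ext p; rw [← hz p]; ring
  · rw [transpose_mul, diagonal_transpose,
      show diagonal z * Vᵀ * B * (V * diagonal z) = diagonal z * (Vᵀ * B * V) * diagonal z by
        simp only [Matrix.mul_assoc]]
    have hGB : Vᵀ * B * V = diagonal fun p => l p * g p := by
      ext p q
      rw [hentry, hBv, dotProduct_smul, smul_eq_mul, Matrix.diagonal_apply]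
      split_ifs with h
      · subst h; rfl
      · rw [horth p q h, mul_zero]
    rw [hGB, diagonal_mul_diagonal, diagonal_mul_diagonal]
    congr 1; ext p
    linear_combination l p * hz p

/-! ### Determinants near diagonal matrices -/

/-- A block triangular matrix with diagonal diagonal blocks has determinant the product of its
diagonal entries. -/
theorem det_eq_prod_diag_of_block {ι S : Type*} [Fintype ι] [DecidableEq ι] [CommRing S]
    (M : Matrix ι ι S) (P : ι → Prop) [DecidablePred P]
    (h : ∀ i j, i ≠ j → (¬ P i ∨ P j) → M i j = 0) : M.det = ∏ i, M i i := by
  rw [Matrix.twoBlockTriangular_det M P fun i hi j hj =>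
    h i j (fun hij => hi (hij ▸ hj)) (Or.inl hi)]
  have h1 : Matrix.toSquareBlockProp M P = diagonal fun i => M i.1 i.1 := by
    ext i j
    rw [diagonal_apply]
    split_ifs with hij
    · subst hij; rfl
    · exact h _ _ (fun e => hij (Subtype.ext e)) (Or.inr j.2)
  have h2 : (Matrix.toSquareBlockProp M fun i => ¬ P i) = diagonal fun i => M i.1 i.1 := by
    ext i j
    rw [diagonal_apply]
    split_ifs with hij
    · subst hij; rfl
    · exact h _ _ (fun e => hij (Subtype.ext e)) (Or.inl i.2)
  rw [h1, h2, det_diagonal, det_diagonal]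
  exact Fintype.prod_subtype_mul_prod_subtype P fun i => M i i

/-- The matrix with diagonal entries `l i + E² e i` and off-diagonal entries `E O i j`, where
`E = Polynomial.X`. -/
noncomputable def perturbed {S : Type*} [CommRing S] {n : ℕ} (l e : Fin n → S)
    (O : Matrix (Fin n) (Fin n) S) : Matrix (Fin n) (Fin n) (Polynomial S) :=
  Matrix.of fun i j =>
    if i = j then Polynomial.C (l i) + Polynomial.X ^ 2 * Polynomial.C (e i)
    else Polynomial.X * Polynomial.C (O i j)

/-- Lowest-order term of the determinant when two diagonal entries `l p`, `l q` vanish: only the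
transposition of `p` and `q` contributes. -/
theorem det_perturbed_node {S : Type*} [CommRing S] {n : ℕ} (l e : Fin n → S)
    (O : Matrix (Fin n) (Fin n) S) {p q : Fin n} (hpq : p ≠ q) (hp : l p = 0) (hq : l q = 0) :
    ∃ w : Polynomial S, (perturbed l e O).det = Polynomial.X ^ 2 * w ∧
      w.coeff 0 = -(O p q * O q p * ∏ s ∈ Finset.univ \ {p, q}, l s) := by
  -- The next matrix is the given one with a factor `E` taken out of rows `p` and `q`.
  let M' : Matrix (Fin n) (Fin n) (Polynomial S) := Matrix.of fun i j =>
    if i = p ∨ i = q then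
      (if i = j then Polynomial.X * Polynomial.C (e i) else Polynomial.C (O i j))
    else perturbed l e O i j
  have hM : perturbed l e O =
      Matrix.of fun i j => (if i = p ∨ i = q then Polynomial.X else 1) * M' i j := by
    ext1 i j
    simp only [M', perturbed, of_apply]
    by_cases hi : i = p ∨ i = q
    · have hl : l i = 0 := by rcases hi with rfl | rfl <;> assumption
      by_cases hij : i = j
      · simp only [if_pos hi, if_pos hij, hl]; simp; ring
      · simp only [if_pos hi, if_neg hij]
    · simp only [if_neg hi, one_mul]
  refine ⟨M'.det, ?_, ?_⟩
  · rw [hM, Matrix.det_mul_column]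
    congr 1
    have : ∀ i : Fin n, (if i = p ∨ i = q then (Polynomial.X : Polynomial S) else 1) =
        if i ∈ ({p, q} : Finset (Fin n)) then Polynomial.X else 1 := by intro i; simp
    simp_rw [this]
    rw [Finset.prod_ite_mem, Finset.univ_inter, Finset.prod_const, Finset.card_pair hpq]
  · rw [Polynomial.coeff_zero_eq_eval_zero, ← Polynomial.coe_evalRingHom, RingHom.map_det]
    set N := (Polynomial.evalRingHom (0 : S)).mapMatrix M' with hN
    have hNe : ∀ i j, N i j = if i = p ∨ i = q then (if i = j then 0 else O i j)
        else if i = j then l i else 0 := by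
      intro i j
      simp only [hN, M', perturbed, RingHom.mapMatrix_apply, map_apply, of_apply]
      split_ifs <;> simp
    have h1 := Matrix.det_permute (Equiv.swap p q) N
    rw [Equiv.Perm.sign_swap hpq] at h1
    have h2 : N.det = -(N.submatrix (Equiv.swap p q) id).det := by rw [h1]; simp
    rw [h2, det_eq_prod_diag_of_block _ (fun i => i = p ∨ i = q)]
    · congr 1
      rw [← Finset.prod_sdiff (Finset.subset_univ ({p, q} : Finset (Fin n))),
        Finset.prod_pair hpq, mul_comm]
      congr 1
      · simp [hNe, hpq, hpq.symm, mul_comm]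
      · refine Finset.prod_congr rfl fun s hs => ?_
        simp only [Finset.mem_sdiff, Finset.mem_univ, true_and, Finset.mem_insert,
          Finset.mem_singleton, not_or] at hs
        simp [hNe, Equiv.swap_apply_of_ne_of_ne hs.1 hs.2, hs.1, hs.2]
    · intro i j hij h
      rw [submatrix_apply, hNe, id]
      by_cases hi : i = p ∨ i = q
      · have hj := h.resolve_left (not_not.2 hi)
        rcases hi with rfl | rfl <;> rcases hj with rfl | rfl <;> simp_all
      · rw [not_or] at hi
        rw [Equiv.swap_apply_of_ne_of_ne hi.1 hi.2]
        simp [hi.1, hi.2, hij]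

/-- Lowest-order term of the determinant when the diagonal entry `l p` vanishes: it is affine in
`e p`, with remainder `y` a polynomial in the entries of `l` and in the `p`-th row and column
of `O`. -/
theorem det_perturbed_line {k S : Type*} [Field k] [CommRing S] [Algebra k S] {n : ℕ}
    (l e : Fin n → S) (O : Matrix (Fin n) (Fin n) S) {p : Fin n} (hp : l p = 0) :
    ∃ (w : Polynomial S) (y : S), (perturbed l e O).det = Polynomial.X ^ 2 * w ∧
      w.coeff 0 = (∏ s ∈ Finset.univ.erase p, l s) * e p + y ∧
      ∀ I : Subalgebra k S, (∀ s, l s ∈ I) → (∀ s, s ≠ p → O p s ∈ I ∧ O s p ∈ I) → y ∈ I := by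
  -- The next matrix is the given one with a factor `E` taken out of row `p` and another out of column `p`.
  let M' : Matrix (Fin n) (Fin n) (Polynomial S) := Matrix.of fun i j =>
    if i = j then
      (if i = p then Polynomial.C (e i) else perturbed l e O i j)
    else if i = p ∨ j = p then Polynomial.C (O i j) else perturbed l e O i j
  let ρ : Fin n → Polynomial S := fun i => if i = p then Polynomial.X else 1
  have hρ : ∏ i, ρ i = Polynomial.X := by simp [ρ]
  have hM : perturbed l e O =
      Matrix.of fun i j => ρ i * (Matrix.of fun i j => ρ j * M' i j) i j := by
    ext1 i j
    simp only [M', ρ, perturbed, of_apply]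
    by_cases hij : i = j
    · subst hij
      by_cases hi : i = p
      · subst hi; simp [hp]; ring
      · simp [hi]
    · by_cases hi : i = p
      · subst hi; simp [hij, Ne.symm hij]
      · by_cases hj : j = p
        · subst hj; simp [hij]
        · simp [hij, hi, hj]
  let N : Matrix (Fin n) (Fin n) S := Matrix.of fun i j =>
    if i = j then (if i = p then 0 else l i) else if i = p ∨ j = p then O i j else 0
  refine ⟨M'.det, N.det, ?_, ?_, ?_⟩
  · rw [hM, Matrix.det_mul_column, Matrix.det_mul_row, hρ]; ring
  · rw [Polynomial.coeff_zero_eq_eval_zero, ← Polynomial.coe_evalRingHom, RingHom.map_det]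
    have h1 : (Polynomial.evalRingHom (0 : S)).mapMatrix M' =
        N.updateRow p (e p • Pi.single p 1 + N p) := by
      ext i j
      simp only [M', N, perturbed, RingHom.mapMatrix_apply, map_apply, of_apply, updateRow_apply]
      by_cases hi : i = p
      · subst hi
        by_cases hij : i = j
        · subst hij; simp
        · simp [hij, Ne.symm hij]
      · by_cases hij : i = j
        · subst hij; simp [hi]
        · by_cases hj : j = p <;> simp [hi, hij, hj]
    rw [h1, det_updateRow_add, det_updateRow_smul, updateRow_eq_self]
    congr 1
    rw [mul_comm (e p) _]
    congr 1
    rw [det_eq_prod_diag_of_block _ (fun i => i ≠ p),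
      ← Finset.mul_prod_erase _ _ (Finset.mem_univ p)]
    · simp only [updateRow_self, Pi.single_eq_same, one_mul]
      refine Finset.prod_congr rfl fun s hs => ?_
      have hs' := Finset.ne_of_mem_erase hs
      simp [N, updateRow_apply, hs']
    · intro i j hij h
      rw [updateRow_apply]
      by_cases hi : i = p
      · subst hi; simp [Ne.symm hij]
      · have hj : j ≠ p := h.resolve_left (not_not.2 hi)
        simp [N, hi, hj, hij]
  · intro I hl hO
    rw [Matrix.det_apply]
    refine sum_mem fun σ _ => ?_
    rw [Units.smul_def]
    refine zsmul_mem (prod_mem fun i _ => ?_) _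
    simp only [N, of_apply]
    split_ifs with h1 h2 h3
    · exact zero_mem _
    · exact hl _
    · rcases h3 with h3 | h3
      · rw [h3]; exact (hO _ (fun h => h1 (h3.trans h.symm))).1
      · have h4 := (hO _ (fun h => h1 (h.trans h3.symm))).2
        rwa [← congrArg (O (σ i)) h3] at h4
    · exact zero_mem _

/-! ### Coefficients of determinantal forms -/

/-- The monomials of degree `n` in `r + 1` variables, as exponent vectors. -/
abbrev DegMonomial (n r : ℕ) : Type := {d : Fin (r + 1) →₀ ℕ // (d.sum fun _ e => e) = n}

instance (n r : ℕ) : Finite (DegMonomial n r) := by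
  refine Finite.of_injective (β := Fin (r + 1) → Fin (n + 1))
    (fun d i => ⟨d.1 i, Nat.lt_succ_of_le ?_⟩) ?_
  · have h := d.2
    rw [Finsupp.sum_fintype _ _ (fun _ => rfl)] at h
    exact (Finset.single_le_sum (f := fun i => d.1 i) (fun _ _ => Nat.zero_le _)
      (Finset.mem_univ i)).trans h.le
  · intro d d' h
    ext i
    simpa using congrArg Fin.val (congrFun h i)

theorem genCharPoly_map {R S : Type*} [CommRing R] [CommRing S] {n r : ℕ} (f : R →+* S)
    (A : Fin (r + 1) → Matrix (Fin n) (Fin n) R) :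
    genCharPoly (fun i => (A i).map f) = MvPolynomial.map f (genCharPoly A) := by
  unfold genCharPoly
  rw [RingHom.map_det]
  congr 1
  ext1 p q
  simp [Matrix.sum_apply]

theorem genCharPoly_isHomogeneous {R : Type*} [CommRing R] {n r : ℕ}
    (A : Fin (r + 1) → Matrix (Fin n) (Fin n) R) : (genCharPoly A).IsHomogeneous n := by
  unfold genCharPoly
  rw [Matrix.det_apply]
  refine MvPolynomial.IsHomogeneous.sum _ _ _ fun σ _ => ?_
  have h : (∏ p, (∑ i : Fin (r + 1), (MvPolynomial.X i : MvPolynomial (Fin (r + 1)) R) •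
      ((A i).map MvPolynomial.C : Matrix (Fin n) (Fin n) (MvPolynomial (Fin (r + 1)) R)))
      (σ p) p).IsHomogeneous n := by
    have := MvPolynomial.IsHomogeneous.prod Finset.univ
      (fun p => (∑ i : Fin (r + 1), (MvPolynomial.X i : MvPolynomial (Fin (r + 1)) R) •
        ((A i).map MvPolynomial.C : Matrix (Fin n) (Fin n) (MvPolynomial (Fin (r + 1)) R)))
        (σ p) p) (fun _ => 1) (fun p _ => ?_)
    · simpa using this
    · rw [Matrix.sum_apply]
      refine MvPolynomial.IsHomogeneous.sum _ _ _ fun i _ => ?_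
      simpa using (MvPolynomial.isHomogeneous_X R i).mul
        (MvPolynomial.isHomogeneous_C (Fin (r + 1)) (A i (σ p) p))
  rcases Int.units_eq_one_or (Equiv.Perm.sign σ) with hs | hs
  · rw [hs, one_smul]; exact h
  · rw [hs, Units.neg_smul, one_smul]; exact h.neg

theorem eval_genCharPoly {R : Type*} [CommRing R] {n r : ℕ}
    (A : Fin (r + 1) → Matrix (Fin n) (Fin n) R) (x : Fin (r + 1) → R) :
    MvPolynomial.eval x (genCharPoly A) = (∑ i, x i • A i).det := by
  unfold genCharPoly
  rw [RingHom.map_det]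
  congr 1
  ext1 p q
  simp [Matrix.sum_apply]

/-- Evaluation of polynomial functions on the space of degree-`n` forms at the form
`det(x_0 A_0 + … + x_r A_r)`, for matrices `A_i` with entries in any `k`-algebra. -/
noncomputable def coeffHom (k : Type*) [Field k] {R : Type*} [CommRing R] [Algebra k R] {n r : ℕ}
    (A : Fin (r + 1) → Matrix (Fin n) (Fin n) R) : MvPolynomial (DegMonomial n r) k →ₐ[k] R :=
  MvPolynomial.aeval fun d => MvPolynomial.coeff d.1 (genCharPoly A)

theorem coeffHom_map {k : Type*} [Field k] {R S : Type*} [CommRing R] [Algebra k R] [CommRing S]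
    [Algebra k S] {n r : ℕ} (f : R →ₐ[k] S) (A : Fin (r + 1) → Matrix (Fin n) (Fin n) R)
    (F : MvPolynomial (DegMonomial n r) k) :
    coeffHom k (fun i => (A i).map f) F = f (coeffHom k A F) := by
  have : coeffHom k (fun i => (A i).map f) = f.comp (coeffHom k A) := by
    ext d
    have h := genCharPoly_map (f : R →+* S) A
    simp only [RingHom.coe_coe] at h
    simp [coeffHom, h, MvPolynomial.coeff_map]
  rw [this]; rfl

/-- Every value of the form at a point with coordinates in `k` is a linear function of its
coefficients. -/
theorem exists_coeffHom_eq_det (k : Type*) [Field k] {n r : ℕ} (x : Fin (r + 1) → k) :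
    ∃ F : MvPolynomial (DegMonomial n r) k, ∀ {R : Type*} [CommRing R] [Algebra k R]
      (A : Fin (r + 1) → Matrix (Fin n) (Fin n) R),
      coeffHom k A F = (∑ i, x i • A i).det := by
  classical
  have := Fintype.ofFinite (DegMonomial n r)
  refine ⟨∑ d, MvPolynomial.C (∏ i, x i ^ d.1 i) * MvPolynomial.X d, fun {R} _ _ A => ?_⟩
  have h1 : (∑ i, x i • A i) = ∑ i, (algebraMap k R (x i)) • A i := by
    refine Finset.sum_congr rfl fun i _ => ?_
    ext p q; simp [Algebra.smul_def]
  rw [h1, ← eval_genCharPoly, MvPolynomial.eval_eq']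
  simp only [coeffHom, map_sum, map_mul, MvPolynomial.aeval_C, MvPolynomial.aeval_X, map_prod,
    map_pow]
  let s : Finset (Fin (r + 1) →₀ ℕ) := Finset.univ.map ⟨fun d : DegMonomial n r => d.1,
    Subtype.val_injective⟩
  have hs : (genCharPoly A).support ⊆ s := by
    intro d hd
    have := genCharPoly_isHomogeneous A (MvPolynomial.mem_support_iff.1 hd)
    rw [Finset.mem_map]
    exact ⟨⟨d, by simpa [Finsupp.weight_apply, Finsupp.sum] using this⟩, Finset.mem_univ _, rfl⟩
  rw [Finset.sum_subset hs, Finset.sum_map]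
  · exact Finset.sum_congr rfl fun d _ => mul_comm _ _
  · intro d _ hd
    rw [MvPolynomial.notMem_support_iff.1 hd, zero_mul]

/-- The tuple of generic symmetric matrices. -/
noncomputable def genericSymm (k : Type*) [Field k] (n r : ℕ) :
    Fin (r + 1) → Matrix (Fin n) (Fin n) (MvPolynomial (Fin (r + 1) × Sym2 (Fin n)) k) :=
  fun i => Matrix.of fun p q => MvPolynomial.X (i, s(p, q))

theorem genericSymm_isSymm (k : Type*) [Field k] (n r : ℕ) (i : Fin (r + 1)) :
    (genericSymm k n r i).IsSymm := by
  ext p q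
  simp [genericSymm, Sym2.eq_swap]

/-- A tuple of symmetric matrices is a specialization of the generic one. -/
theorem exists_specialization {k : Type*} [Field k] {R : Type*} [CommRing R] [Algebra k R]
    {n r : ℕ} (A : Fin (r + 1) → Matrix (Fin n) (Fin n) R) (hA : ∀ i, (A i).IsSymm) :
    ∃ f : MvPolynomial (Fin (r + 1) × Sym2 (Fin n)) k →ₐ[k] R,
      (fun i => (genericSymm k n r i).map f) = A := by
  refine ⟨MvPolynomial.aeval fun z => Sym2.lift ⟨fun p q => A z.1 p q, fun p q =>
    (hA z.1).apply q p⟩ z.2, ?_⟩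
  ext i p q
  simp [genericSymm]

/-- Over an infinite field, a polynomial function vanishes at all determinantal forms if and only
if it vanishes at the generic one; in particular the vanishing ideal is prime. -/
theorem ker_sdhypConeCoordEval (k : Type*) [Field k] [Infinite k] (n r : ℕ) :
    RingHom.ker (sdhypConeCoordEval k n r) = RingHom.ker (coeffHom k (genericSymm k n r)) := by
  ext F
  rw [RingHom.mem_ker, RingHom.mem_ker]
  have key : ∀ A : {A : Fin (r + 1) → Matrix (Fin n) (Fin n) k // ∀ i, (A i).IsSymm},
      sdhypConeCoordEval k n r F A = coeffHom k A.1 F := by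
    intro A
    simp only [sdhypConeCoordEval, coeffHom]
    rfl
  constructor
  · intro h
    refine MvPolynomial.funext fun a => ?_
    have h1 := coeffHom_map (MvPolynomial.aeval a) (genericSymm k n r) F
    rw [map_zero, ← MvPolynomial.coe_aeval_eq_eval]
    refine h1.symm.trans ?_
    have := key ⟨fun i => (genericSymm k n r i).map (MvPolynomial.aeval a), fun i => by
      have := genericSymm_isSymm k n r i
      exact (Matrix.transpose_map ..).symm.trans (by rw [this.eq])⟩
    rw [← this, h]; rfl
  · intro h
    funext A
    obtain ⟨f, hf⟩ := exists_specialization (k := k) A.1 A.2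
    rw [key, ← hf, coeffHom_map, h, map_zero]; rfl

/-! ### Upper bound -/

/-- The coordinates of the slice of forms `c · det(∑ x_i A_i)` with `A_0 = 1` and `A_1` diagonal:
`none` is the scalar `c`, `inl p` is the `p`-th diagonal entry of `A_1`, and `inr (i, s(p, q))` is
the `(p, q)` entry of `A_{i+2}`. -/
abbrev SliceCoord (n q : ℕ) : Type := Option (Fin n ⊕ Fin q × Sym2 (Fin n))

theorem card_sliceCoord (n q : ℕ) :
    Fintype.card (SliceCoord n q) = q * (n * (n + 1) / 2) + n + 1 := by
  simp only [Fintype.card_option, Fintype.card_sum, Fintype.card_fin, Fintype.card_prod, Sym2.card,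
    Nat.choose_two_right, Nat.add_sub_cancel]
  rw [mul_comm (n + 1) n]
  ring

theorem genCharPoly_conj {R : Type*} [CommRing R] {n r : ℕ}
    (A : Fin (r + 1) → Matrix (Fin n) (Fin n) R) (V : Matrix (Fin n) (Fin n) R) :
    genCharPoly (fun i => Vᵀ * A i * V) = MvPolynomial.C (V.det ^ 2) * genCharPoly A := by
  unfold genCharPoly
  have h : ∑ i : Fin (r + 1), (MvPolynomial.X i : MvPolynomial (Fin (r + 1)) R) •
      ((Vᵀ * A i * V).map MvPolynomial.C : Matrix (Fin n) (Fin n) (MvPolynomial (Fin (r + 1)) R)) =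
      (V.map MvPolynomial.C)ᵀ * (∑ i : Fin (r + 1),
        (MvPolynomial.X i : MvPolynomial (Fin (r + 1)) R) • ((A i).map MvPolynomial.C :
          Matrix (Fin n) (Fin n) (MvPolynomial (Fin (r + 1)) R))) * V.map MvPolynomial.C := by
    rw [Finset.mul_sum, Finset.sum_mul]
    refine Finset.sum_congr rfl fun i _ => ?_
    rw [Matrix.map_mul, Matrix.map_mul, Matrix.mul_smul, Matrix.smul_mul, Matrix.transpose_map]
  have hV : (V.map (MvPolynomial.C : R →+* MvPolynomial (Fin (r + 1)) R)).det =
      MvPolynomial.C V.det := (RingHom.map_det _ _).symm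
  rw [h, Matrix.det_mul, Matrix.det_mul, Matrix.det_transpose, hV, map_pow]
  ring

/-- The universal tuple `(1, diagonal, symmetric, …, symmetric)`. -/
noncomputable def slice (k : Type*) [Field k] (n q : ℕ) :
    Fin (q + 2) → Matrix (Fin n) (Fin n) (MvPolynomial (SliceCoord n q) k) :=
  Fin.cons 1 (Fin.cons (diagonal fun p => MvPolynomial.X (some (Sum.inl p)))
    fun i => Matrix.of fun p s => MvPolynomial.X (some (Sum.inr (i, s(p, s)))))

/-- If `A_0` is invertible and `A_0, A_1` span a pencil with distinct eigenvalues, then the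
coefficients of `det(∑ x_i A_i)` are polynomials in `#(SliceCoord n q)` elements. -/
theorem exists_coeffHom_mem_range {k K : Type*} [Field k] [Field K] [IsAlgClosed K] [Algebra k K]
    {n q : ℕ} (A : Fin (q + 2) → Matrix (Fin n) (Fin n) K) (hA : ∀ i, (A i).IsSymm)
    (hdet : (A 0).det ≠ 0)
    (hsep : (det ((Polynomial.X : Polynomial K) • (A 0).map Polynomial.C +
      (-(A 1)).map Polynomial.C)).Separable) :
    ∃ y : SliceCoord n q → K, ∀ F, coeffHom k A F ∈
      (MvPolynomial.aeval y : MvPolynomial (SliceCoord n q) k →ₐ[k] K).range := by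
  obtain ⟨V, l, h0, h1⟩ := exists_simultaneous_diagonalization (A 0) (A 1) (hA 0) (hA 1) hdet hsep
  have hs : ∀ i, (Vᵀ * A i * V).IsSymm := fun i => by
    rw [Matrix.IsSymm, Matrix.transpose_mul, Matrix.transpose_mul, Matrix.transpose_transpose,
      (hA i).eq, Matrix.mul_assoc]
  have hV : (A 0).det * V.det ^ 2 = 1 := by
    have := congrArg Matrix.det h0
    rw [Matrix.det_mul, Matrix.det_mul, Matrix.det_transpose, Matrix.det_one] at this
    rw [← this]; ring
  let y : SliceCoord n q → K := fun o => o.elim (A 0).det (Sum.elim l fun z =>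
    Sym2.lift ⟨fun p s => (Vᵀ * A z.1.succ.succ * V) p s, fun p s =>
      (hs z.1.succ.succ).apply s p⟩ z.2)
  let φ : MvPolynomial (SliceCoord n q) k →ₐ[k] K := MvPolynomial.aeval y
  have hslice : (fun i => Vᵀ * A i * V) = fun i => (slice k n q i).map (φ : _ →+* K) := by
    funext i
    refine Fin.cases ?_ (fun i => Fin.cases ?_ (fun i => ?_) i) i
    · rw [h0]; simp [slice]
    · have : Vᵀ * A (Fin.succ 0) * V = diagonal l := h1
      rw [this]
      simp only [slice, Fin.cons_succ, Fin.cons_zero]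
      rw [Matrix.diagonal_map (map_zero _)]
      congr 1
      funext p
      simp [φ, y]
    · ext p s
      simp [slice, φ, y]
  have hgen : genCharPoly A = MvPolynomial.map (φ : _ →+* K)
      (MvPolynomial.C (MvPolynomial.X none) * genCharPoly (slice k n q)) := by
    rw [map_mul, ← genCharPoly_map, ← hslice, genCharPoly_conj, MvPolynomial.map_C, ← mul_assoc,
      ← map_mul]
    have : (φ : MvPolynomial (SliceCoord n q) k →+* K) (MvPolynomial.X none) = (A 0).det := by simp [φ, y]
    rw [this, hV, map_one, one_mul]
  refine ⟨y, fun F => ⟨MvPolynomial.aeval (fun d : DegMonomial n (q + 1) => MvPolynomial.coeff d.1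
    (MvPolynomial.C (MvPolynomial.X none) * genCharPoly (slice k n q))) F, ?_⟩⟩
  have : coeffHom k A = φ.comp (MvPolynomial.aeval (fun d : DegMonomial n (q + 1) =>
      MvPolynomial.coeff d.1
        (MvPolynomial.C (MvPolynomial.X none) * genCharPoly (slice k n q)))) := by
    ext d
    rw [coeffHom, MvPolynomial.aeval_X, hgen, MvPolynomial.coeff_map]
    simp
  rw [this]; rfl

/-- The characteristic polynomial of a pencil is separable as soon as some specialization of the
pencil is `(1, diagonal t)` with distinct `t`. -/
theorem pencil_separable {T k K : Type*} [CommRing T] [Field k] [Field K] (φ : T →+* k)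
    (ι : T →+* K) (hι : Function.Injective ι) {n : ℕ} (A B : Matrix (Fin n) (Fin n) T)
    (hn : n ≠ 0) (t : Fin n → k) (ht : Function.Injective t) (hA : A.map φ = 1)
    (hB : B.map φ = diagonal t) :
    (det ((Polynomial.X : Polynomial K) • (A.map ι).map Polynomial.C +
      (-(B.map ι)).map Polynomial.C)).Separable := by
  let P : Polynomial T := det ((Polynomial.X : Polynomial T) • A.map Polynomial.C +
      (-B).map Polynomial.C)
  have hPι : P.map ι = det ((Polynomial.X : Polynomial K) • (A.map ι).map Polynomial.C +
      (-(B.map ι)).map Polynomial.C) := by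
    rw [← Polynomial.coe_mapRingHom, RingHom.map_det]
    congr 1
    ext1 a b
    simp
  have hPφ : P.map φ = ∏ p, (Polynomial.X - Polynomial.C (t p)) := by
    have : P.map φ = det ((Polynomial.X : Polynomial k) • (A.map φ).map Polynomial.C +
        (-(B.map φ)).map Polynomial.C) := by
      rw [← Polynomial.coe_mapRingHom, RingHom.map_det]
      congr 1
      ext1 a b
      simp
    rw [this, hA, hB, ← Matrix.det_diagonal]
    congr 1
    ext1 a b
    by_cases hab : a = b
    · subst hab; simp [sub_eq_add_neg]
    · simp [hab]
  rw [← hPι]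
  refine separable_of_specialization φ ι hι P hn ?_ ?_ ?_
  · exact (Polynomial.natDegree_det_X_add_C_le _ _).trans (by simp)
  · rw [hPφ, Polynomial.natDegree_prod_of_monic _ _ fun p _ => Polynomial.monic_X_sub_C _]
    simp
  · rw [hPφ]
    exact Polynomial.separable_prod_X_sub_C_iff.2 ht

theorem trdeg_range_coeffHom_le_of_embedding {k Ω : Type u} [Field k] [Infinite k] [Field Ω]
    [IsAlgClosed Ω] [Algebra k Ω] {n q : ℕ} (hn : n ≠ 0)
    (ι : MvPolynomial (Fin (q + 1 + 1) × Sym2 (Fin n)) k →ₐ[k] Ω) (hι : Function.Injective ι) :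
    Algebra.trdeg k (coeffHom k (genericSymm k n (q + 1))).range ≤
      (Fintype.card (SliceCoord n q) : Cardinal) := by
  let T := MvPolynomial (Fin (q + 1 + 1) × Sym2 (Fin n)) k
  let G := genericSymm k n (q + 1)
  obtain ⟨t, ht⟩ : ∃ t : Fin n → k, Function.Injective t :=
    ⟨_, (Infinite.natEmbedding k).injective.comp Fin.val_injective⟩
  -- The specialization `A_0 = 1`, `A_1 = diagonal t` shows that the generic pencil is regular with
  -- distinct eigenvalues.
  obtain ⟨f, hf⟩ := exists_specialization (k := k) (R := k) (n := n) (r := q + 1)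
    (Fin.cons 1 (Fin.cons (diagonal t) fun _ => 0)) (by
      intro i
      refine Fin.cases ?_ (fun i => Fin.cases ?_ (fun i => ?_) i) i
      · exact Matrix.isSymm_one
      · exact Matrix.isSymm_diagonal t
      · exact Matrix.isSymm_zero)
  have hf0 : (G 0).map f = 1 := congrFun hf 0
  have hf1 : (G 1).map f = diagonal t := congrFun hf 1
  have hsep := pencil_separable (f : T →+* k) (ι : T →+* Ω) hι (G 0) (G 1) hn t ht hf0 hf1
  obtain ⟨y, hy⟩ := exists_coeffHom_mem_range (k := k) (K := Ω) (n := n) (q := q)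
    (fun i => (G i).map ι) (fun i => (Matrix.transpose_map ..).symm.trans
      (by rw [(genericSymm_isSymm k n (q + 1) i).eq])) (by
        have h1 : ((G 0).map ι).det = ι (G 0).det := (AlgHom.map_det _ _).symm
        intro h
        rw [h1] at h
        have h2 : (G 0).det = 0 := hι (h.trans (map_zero ι).symm)
        have h3 : ((G 0).map f).det = f (G 0).det := (AlgHom.map_det _ _).symm
        rw [hf0, h2, map_zero, Matrix.det_one] at h3
        exact one_ne_zero h3) hsep
  let φ : MvPolynomial (SliceCoord n q) k →ₐ[k] Ω := MvPolynomial.aeval y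
  let g : (coeffHom k G).range →ₐ[k] φ.range :=
    (ι.comp (coeffHom k G).range.val).codRestrict φ.range (by
      rintro ⟨_, F, rfl⟩
      have := hy F
      rw [coeffHom_map] at this
      exact this)
  have hg : Function.Injective g := by
    intro a b h
    exact Subtype.ext (hι (congrArg Subtype.val h))
  refine (trdeg_le_of_injective g hg).trans
    ((trdeg_le_of_surjective φ.rangeRestrict φ.rangeRestrict_surjective).trans ?_)
  rw [MvPolynomial.trdeg_of_isDomain]
  simp

theorem trdeg_range_coeffHom_le (k : Type u) [Field k] [Infinite k] {n q : ℕ} (hn : n ≠ 0) :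
    Algebra.trdeg k (coeffHom k (genericSymm k n (q + 1))).range ≤
      (Fintype.card (SliceCoord n q) : Cardinal) := by
  let T := MvPolynomial (Fin (q + 1 + 1) × Sym2 (Fin n)) k
  let Ω := AlgebraicClosure (FractionRing T)
  let ι : T →ₐ[k] Ω := IsScalarTower.toAlgHom k T Ω
  have hι : Function.Injective ι := by
    have : Function.Injective (algebraMap T Ω) := by
      rw [IsScalarTower.algebraMap_eq T (FractionRing T) Ω]
      exact (algebraMap (FractionRing T) Ω).injective.comp (IsFractionRing.injective T _)
    exact this
  exact trdeg_range_coeffHom_le_of_embedding hn ι hι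

/-! ### Lower bound -/

/-- A one-parameter deformation, with parameter `E = Polynomial.X`, of the tuple of diagonal
matrices `(1, diagonal t, diagonal t⁻¹, …, diagonal t⁻¹)` within symmetric matrices: the slice
coordinates perturb the diagonal entries to order `E²` and the off-diagonal entries to order
`E`. -/
noncomputable def deformation {k : Type*} [Field k] {n : ℕ} (q : ℕ) (t : Fin n → k) (p₀ : Fin n) :
    Fin (q + 2) → Matrix (Fin n) (Fin n) (Polynomial (MvPolynomial (SliceCoord n q) k)) :=
  Fin.cons (diagonal fun p => 1 + Polynomial.X ^ 2 *
      Polynomial.C (if p = p₀ then MvPolynomial.X none else 0))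
    (Fin.cons (diagonal fun p => Polynomial.C (MvPolynomial.C (t p)) +
        Polynomial.X ^ 2 * Polynomial.C (MvPolynomial.X (some (Sum.inl p))))
      fun i => Matrix.of fun p s =>
        if p = s then Polynomial.C (MvPolynomial.C (t p)⁻¹) +
          Polynomial.X ^ 2 * Polynomial.C (MvPolynomial.X (some (Sum.inr (i, s(p, s)))))
        else Polynomial.X * Polynomial.C (MvPolynomial.X (some (Sum.inr (i, s(p, s))))))

theorem deformation_isSymm {k : Type*} [Field k] {n : ℕ} (q : ℕ) (t : Fin n → k) (p₀ : Fin n)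
    (i : Fin (q + 2)) : (deformation q t p₀ i).IsSymm := by
  refine Fin.cases ?_ (fun i => Fin.cases ?_ (fun i => ?_) i) i
  · exact Matrix.isSymm_diagonal _
  · exact Matrix.isSymm_diagonal _
  · ext p s
    simp only [deformation, Fin.cons_succ, Matrix.transpose_apply, Matrix.of_apply]
    by_cases h : p = s
    · subst h; rfl
    · rw [if_neg h, if_neg (Ne.symm h), Sym2.eq_swap]

theorem sum_smul_deformation {k : Type*} [Field k] {n : ℕ} (q : ℕ) (t : Fin n → k) (p₀ : Fin n)
    (a b : k) (c : Fin q → k) :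
    ∑ i, (Fin.cons a (Fin.cons b c) : Fin (q + 2) → k) i • deformation q t p₀ i =
      perturbed (fun s => MvPolynomial.C (a + b * t s + (∑ i, c i) * (t s)⁻¹))
        (fun s => MvPolynomial.C a * (if s = p₀ then MvPolynomial.X none else 0) +
          MvPolynomial.C b * MvPolynomial.X (some (Sum.inl s)) +
          ∑ i, MvPolynomial.C (c i) * MvPolynomial.X (some (Sum.inr (i, s(s, s)))))
        (fun p s => ∑ i, MvPolynomial.C (c i) * MvPolynomial.X (some (Sum.inr (i, s(p, s))))) := by
  have hsm : ∀ (x : k) (f : Polynomial (MvPolynomial (SliceCoord n q) k)),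
      x • f = Polynomial.C (MvPolynomial.C x) * f := fun x f => Algebra.smul_def x f
  rw [Fin.sum_univ_succ, Fin.sum_univ_succ]
  ext1 p s
  simp only [Matrix.add_apply, Matrix.sum_apply, Matrix.smul_apply, Fin.cons_zero, Fin.cons_succ,
    deformation, perturbed, Matrix.of_apply, hsm]
  by_cases h : p = s
  · subst h
    simp only [if_true, Matrix.diagonal_apply_eq, map_add, map_sum, map_mul, mul_add,
      Finset.sum_add_distrib, Finset.sum_mul, Finset.mul_sum]
    simp only [mul_left_comm (Polynomial.C _) (Polynomial.X ^ 2)]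
    ring
  · simp only [if_neg h, Matrix.diagonal_apply_ne _ h, mul_zero, zero_add, map_sum, map_mul,
      Finset.mul_sum]
    exact Finset.sum_congr rfl fun i _ => by ring

/-- The slice coordinates are recovered from the lowest-order terms in two rounds: first the
scalar and the off-diagonal entries (`0`), then the diagonal entries (`1`). -/
def recoveryRound {n q : ℕ} : SliceCoord n q → ℕ
  | none => 0
  | some (Sum.inl _) => 1
  | some (Sum.inr (_, z)) => if z.IsDiag then 1 else 0

/-- Some value of the deformed form at a point of `k^{q+2}` has the shape `v + E² w`, where the
slice coordinate `X_j` can be recovered, up to taking a square root, from `w mod E` and the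
coordinates of earlier rounds. -/
theorem exists_recover {k : Type*} [Field k] {n : ℕ} (q : ℕ) (t : Fin n → k)
    (ht : Function.Injective t) (ht0 : ∀ p, t p ≠ 0) (p₀ : Fin n) (j : SliceCoord n q) :
    ∃ (F : MvPolynomial (DegMonomial n (q + 1)) k) (v : k)
      (w : Polynomial (MvPolynomial (SliceCoord n q) k)),
      coeffHom k (deformation q t p₀) F = algebraMap k _ v + Polynomial.X ^ 2 * w ∧
      ∀ I : Subalgebra k (MvPolynomial (SliceCoord n q) k), (∀ f, f ^ 2 ∈ I → f ∈ I) →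
        w.coeff 0 ∈ I → (∀ j', recoveryRound j' < recoveryRound j → MvPolynomial.X j' ∈ I) →
        MvPolynomial.X j ∈ I := by
  have hC : ∀ (I : Subalgebra k (MvPolynomial (SliceCoord n q) k)) (c : k),
      MvPolynomial.C c ∈ I := fun I c => I.algebraMap_mem c
  have hcancel : ∀ (I : Subalgebra k (MvPolynomial (SliceCoord n q) k)) (c : k), c ≠ 0 → ∀ f,
      MvPolynomial.C c * f ∈ I → f ∈ I := by
    intro I c hc f hf
    have := I.mul_mem (hC I c⁻¹) hf
    rwa [← mul_assoc, ← map_mul, inv_mul_cancel₀ hc, map_one, one_mul] at this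
  rcases j with _ | p | ⟨i, z⟩
  · obtain ⟨F, hF⟩ := exists_coeffHom_eq_det k (n := n)
      (Fin.cons 1 (Fin.cons 0 0) : Fin (q + 2) → k)
    refine ⟨F, 1, Polynomial.C (MvPolynomial.X none), ?_, fun I _ h _ => by simpa using h⟩
    rw [hF, Fin.sum_univ_succ, Fin.sum_univ_succ]
    simp only [Fin.cons_zero, Fin.cons_succ, one_smul, zero_smul, Pi.zero_apply,
      Finset.sum_const_zero, add_zero, deformation, Matrix.det_diagonal, map_one]
    rw [Finset.prod_eq_single p₀ (fun p _ hp => by simp [hp]) (by simp), if_pos rfl]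
  · -- `(-t_p, 1, 0, …, 0)` lies on the `p`-th hyperplane and on no other.
    obtain ⟨F, hF⟩ := exists_coeffHom_eq_det k (n := n)
      (Fin.cons (-t p) (Fin.cons 1 0) : Fin (q + 2) → k)
    obtain ⟨w, y, hw, hw0, hy⟩ := det_perturbed_line (k := k) (p := p)
      (fun s => MvPolynomial.C (-t p + 1 * t s + (∑ i : Fin q, (0 : Fin q → k) i) * (t s)⁻¹))
        (fun s => MvPolynomial.C (-t p) * (if s = p₀ then MvPolynomial.X none else 0) +
          MvPolynomial.C 1 * MvPolynomial.X (some (Sum.inl s)) +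
          ∑ i : Fin q, MvPolynomial.C ((0 : Fin q → k) i) *
            MvPolynomial.X (some (Sum.inr (i, s(s, s)))))
        (fun p s => ∑ i : Fin q, MvPolynomial.C ((0 : Fin q → k) i) *
          MvPolynomial.X (some (Sum.inr (i, s(p, s))))) (by simp)
    refine ⟨F, 0, w, by rw [hF, sum_smul_deformation, hw, map_zero, zero_add], ?_⟩
    intro I _ hI hlow
    have hyI : y ∈ I := hy I (fun s => hC I _) (fun s _ => by simp)
    have hnone : MvPolynomial.X none ∈ I := hlow none (by simp [recoveryRound])
    rw [hw0] at hI
    have h1 := (add_mem_cancel_right hyI).1 hI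
    rw [← map_prod] at h1
    have h2 := hcancel I _ (Finset.prod_ne_zero_iff.2 fun s hs => by
      simpa [neg_add_eq_sub, sub_eq_zero] using ht.ne (Finset.ne_of_mem_erase hs)) _ h1
    have h3 : MvPolynomial.C (-t p) * (if p = p₀ then MvPolynomial.X none else 0) ∈ I := by
      refine I.mul_mem (hC I _) ?_
      split_ifs
      · exact hnone
      · exact I.zero_mem
    simp only [Pi.zero_apply, map_zero, zero_mul, Finset.sum_const_zero, add_zero, map_one,
      one_mul] at h2
    exact (add_mem_cancel_left h3).1 h2
  · induction z using Sym2.inductionOn with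
    | hf p s =>
    by_cases hps : p = s
    · -- `(-1/t_p, 0, …, 1, …, 0)` lies on the `p`-th hyperplane and on no other.
      subst hps
      obtain ⟨F, hF⟩ := exists_coeffHom_eq_det k (n := n)
        (Fin.cons (-(t p)⁻¹) (Fin.cons 0 (Pi.single i 1)) : Fin (q + 2) → k)
      obtain ⟨w, y, hw, hw0, hy⟩ := det_perturbed_line (k := k) (p := p)
        (fun s => MvPolynomial.C (-(t p)⁻¹ + 0 * t s +
          (∑ i' : Fin q, (Pi.single i 1 : Fin q → k) i') * (t s)⁻¹))
        (fun s => MvPolynomial.C (-(t p)⁻¹) * (if s = p₀ then MvPolynomial.X none else 0) +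
          MvPolynomial.C 0 * MvPolynomial.X (some (Sum.inl s)) +
          ∑ i' : Fin q, MvPolynomial.C ((Pi.single i 1 : Fin q → k) i') *
            MvPolynomial.X (some (Sum.inr (i', s(s, s)))))
        (fun p s => ∑ i' : Fin q, MvPolynomial.C ((Pi.single i 1 : Fin q → k) i') *
          MvPolynomial.X (some (Sum.inr (i', s(p, s))))) (by simp)
      refine ⟨F, 0, w, by rw [hF, sum_smul_deformation, hw, map_zero, zero_add], ?_⟩
      intro I _ hI hlow
      have hsum : ∀ g : Fin q → MvPolynomial (SliceCoord n q) k,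
          ∑ i', MvPolynomial.C ((Pi.single i 1 : Fin q → k) i') * g i' = g i := by
        intro g
        rw [Finset.sum_eq_single i (fun i' _ h => by simp [h]) (by simp)]
        simp
      have hyI : y ∈ I := hy I (fun s => hC I _) (fun s hs => by
        rw [hsum, hsum]
        exact ⟨hlow _ (by simp [recoveryRound, Ne.symm hs]), hlow _ (by simp [recoveryRound, hs])⟩)
      have hnone : MvPolynomial.X none ∈ I := hlow none (by simp [recoveryRound])
      rw [hw0, hsum] at hI
      have h1 := (add_mem_cancel_right hyI).1 hI
      rw [← map_prod] at h1
      have h2 := hcancel I _ (Finset.prod_ne_zero_iff.2 fun s hs => by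
        simpa [neg_add_eq_sub, sub_eq_zero] using ht.ne (Finset.ne_of_mem_erase hs)) _ h1
      have h3 : MvPolynomial.C (-(t p)⁻¹) * (if p = p₀ then MvPolynomial.X none else 0) ∈ I := by
        refine I.mul_mem (hC I _) ?_
        split_ifs
        · exact hnone
        · exact I.zero_mem
      rw [map_zero, zero_mul, add_zero] at h2
      exact (add_mem_cancel_left h3).1 h2
    · -- `(-(t_p + t_s), 1, 0, …, t_p t_s, …, 0)` lies on the `p`-th and `s`-th hyperplanes only.
      obtain ⟨F, hF⟩ := exists_coeffHom_eq_det k (n := n)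
        (Fin.cons (-(t p + t s)) (Fin.cons 1 (Pi.single i (t p * t s))) : Fin (q + 2) → k)
      have hroot : ∀ u, -(t p + t s) + 1 * t u +
          (∑ i' : Fin q, (Pi.single i (t p * t s) : Fin q → k) i') * (t u)⁻¹ =
          (t u - t p) * (t u - t s) * (t u)⁻¹ := by
        intro u
        have := ht0 u
        rw [Finset.sum_pi_single']
        simp only [Finset.mem_univ, if_true]
        field_simp
        ring
      obtain ⟨w, hw, hw0⟩ := det_perturbed_node (p := p) (q := s)
        (fun u => MvPolynomial.C (-(t p + t s) + 1 * t u +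
          (∑ i' : Fin q, (Pi.single i (t p * t s) : Fin q → k) i') * (t u)⁻¹))
        (fun u => MvPolynomial.C (-(t p + t s)) * (if u = p₀ then MvPolynomial.X none else 0) +
          MvPolynomial.C 1 * MvPolynomial.X (some (Sum.inl u)) +
          ∑ i' : Fin q, MvPolynomial.C ((Pi.single i (t p * t s) : Fin q → k) i') *
            MvPolynomial.X (some (Sum.inr (i', s(u, u)))))
        (fun u u' => ∑ i' : Fin q, MvPolynomial.C ((Pi.single i (t p * t s) : Fin q → k) i') *
          MvPolynomial.X (some (Sum.inr (i', s(u, u'))))) hps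
        (by rw [hroot]; simp) (by rw [hroot]; simp)
      refine ⟨F, 0, w, by rw [hF, sum_smul_deformation, hw, map_zero, zero_add], ?_⟩
      intro I hsq hI _
      have hsum : ∀ g : Fin q → MvPolynomial (SliceCoord n q) k,
          ∑ i', MvPolynomial.C ((Pi.single i (t p * t s) : Fin q → k) i') * g i' =
            MvPolynomial.C (t p * t s) * g i := by
        intro g
        rw [Finset.sum_eq_single i (fun i' _ h => by simp [h]) (by simp)]
        simp
      rw [hw0, hsum, hsum, ← map_prod, Sym2.eq_swap (a := s) (b := p)] at hI
      have hne : -((t p * t s) ^ 2 * ∏ u ∈ Finset.univ \ {p, s},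
          (-(t p + t s) + 1 * t u +
          (∑ i' : Fin q, (Pi.single i (t p * t s) : Fin q → k) i') * (t u)⁻¹)) ≠ 0 := by
        refine neg_ne_zero.2 (mul_ne_zero (pow_ne_zero _ (mul_ne_zero (ht0 _) (ht0 _)))
          (Finset.prod_ne_zero_iff.2 fun u hu => ?_))
        rw [hroot]
        simp only [Finset.mem_sdiff, Finset.mem_univ, true_and, Finset.mem_insert,
          Finset.mem_singleton, not_or] at hu
        exact mul_ne_zero (mul_ne_zero (sub_ne_zero.2 (ht.ne hu.1)) (sub_ne_zero.2 (ht.ne hu.2)))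
          (inv_ne_zero (ht0 u))
      refine hsq _ (hcancel I _ hne _ ?_)
      convert hI using 1
      rw [map_neg, map_mul, map_pow]
      ring

theorem le_trdeg_range_coeffHom (k : Type u) [Field k] [Infinite k] {n q : ℕ} (hn : n ≠ 0) :
    (Fintype.card (SliceCoord n q) : Cardinal) ≤
      Algebra.trdeg k (coeffHom k (genericSymm k n (q + 1))).range := by
  have hinf : Infinite ({0}ᶜ : Set k) := (Set.finite_singleton (0 : k)).infinite_compl.to_subtype
  let t : Fin n → k := fun p => (Infinite.natEmbedding ({0}ᶜ : Set k) p : k)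
  have ht : Function.Injective t :=
    Subtype.val_injective.comp ((Infinite.natEmbedding _).injective.comp Fin.val_injective)
  have ht0 : ∀ p, t p ≠ 0 := fun p => (Infinite.natEmbedding ({0}ᶜ : Set k) p).2
  let p₀ : Fin n := ⟨0, Nat.pos_of_ne_zero hn⟩
  choose F v w hF hw using exists_recover q t ht ht0 p₀
  have hind : AlgebraicIndependent k fun j => (w j).coeff 0 := by
    -- The polynomial ring is integral over the subalgebra `B` generated by the lowest-order terms,
    -- so these `#(SliceCoord n q)` elements form a transcendence basis.
    let B := Algebra.adjoin k (Set.range fun j => (w j).coeff 0)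
    let I : Subalgebra k (MvPolynomial (SliceCoord n q) k) :=
      (integralClosure B (MvPolynomial (SliceCoord n q) k)).restrictScalars k
    have hsq : ∀ f, f ^ 2 ∈ I → f ∈ I := fun f hf => IsIntegral.of_pow (n := 2) two_pos hf
    have hwI : ∀ j, (w j).coeff 0 ∈ I := fun j =>
      isIntegral_algebraMap (R := B) (x := ⟨_, Algebra.subset_adjoin ⟨j, rfl⟩⟩)
    have h0 : ∀ j, recoveryRound j = 0 → MvPolynomial.X j ∈ I := fun j hj =>
      hw j I hsq (hwI j) fun j' hj' => by omega
    have h1 : ∀ j, MvPolynomial.X j ∈ I := fun j => hw j I hsq (hwI j) fun j' hj' => h0 j' (by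
      have : recoveryRound j ≤ 1 := by
        unfold recoveryRound
        split <;> [omega; omega; skip]
        split_ifs <;> omega
      omega)
    have htop : I = ⊤ := by
      rw [eq_top_iff, ← MvPolynomial.adjoin_range_X, Algebra.adjoin_le_iff]
      rintro _ ⟨j, rfl⟩
      exact h1 j
    have hintg : Algebra.IsIntegral B (MvPolynomial (SliceCoord n q) k) :=
      ⟨fun f => by
        have : f ∈ I := htop ▸ Algebra.mem_top
        exact this⟩
    have halg : Algebra.IsAlgebraic B (MvPolynomial (SliceCoord n q) k) := inferInstance
    exact (Algebra.IsAlgebraic.isTranscendenceBasis_of_lift_le_trdeg_of_finite k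
      (fun j => (w j).coeff 0) (by rw [MvPolynomial.trdeg_of_isDomain]; simp)).1
  obtain ⟨f, hf⟩ := exists_specialization (k := k) (deformation q t p₀) (deformation_isSymm q t p₀)
  let z : SliceCoord n q → (coeffHom k (genericSymm k n (q + 1))).range := fun j =>
    (coeffHom k (genericSymm k n (q + 1))).rangeRestrict (F j)
  have hz : AlgebraicIndependent k z := by
    refine AlgebraicIndependent.of_comp
      (f.comp (coeffHom k (genericSymm k n (q + 1))).range.val) ?_
    convert algebraicIndependent_of_lowest v w hind using 1
    funext j
    rw [← hF, ← hf, coeffHom_map]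
    rfl
  simpa using hz.lift_cardinalMk_le_trdeg

/-! ### Dimension of the cone -/

/-- **Corollary 4.1.** For `k` algebraically closed of characteristic `≠ 2`, `n ≥ 1` and
`r ≥ 2`, the Zariski closure of the image of
`φ : (Symm_n)^{r+1} → {degree-n forms}`, `A ↦ det(x_0 A_0 + … + x_r A_r)` — the affine cone
over the locus `SDHyp_{r,n}` of symmetric determinantal hypersurfaces — has dimension
`(r − 1)·n(n+1)/2 + n + 1`; equivalently, the Krull dimension of its coordinate ring (the
polynomial ring on the coefficient coordinates modulo the vanishing ideal of the image of
`φ`) is `(r − 1)·n(n+1)/2 + n + 1`.  Equivalently, `SDHyp_{r,n}` has dimension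
`(r − 1)·n(n+1)/2 + n` in the projective space of degree-`n` hypersurfaces in `ℙ^r`. -/
theorem dim_symmetric_determinantal_locus
    (k : Type*) [Field k] [IsAlgClosed k] (hk : ringChar k ≠ 2)
    (n r : ℕ) (hn : 1 ≤ n) (hr : 2 ≤ r) :
    ringKrullDim
        (MvPolynomial {d : Fin (r + 1) →₀ ℕ // (d.sum fun _ e => e) = n} k ⧸
          RingHom.ker (sdhypConeCoordEval k n r)) =
      (((r - 1) * (n * (n + 1) / 2) + n + 1 : ℕ) : WithBot (WithTop ℕ)) := by
  obtain ⟨q, rfl⟩ : ∃ q, r = q + 1 := ⟨r - 1, by omega⟩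
  have : Infinite k := IsAlgClosed.instInfinite
  let φ := coeffHom k (genericSymm k n (q + 1))
  have hφ : (φ.range).FG := by
    rw [← Algebra.map_top]
    exact (Algebra.FiniteType.out (R := k)
      (A := MvPolynomial (DegMonomial n (q + 1)) k)).map φ
  have hfin : Algebra.FiniteType k φ.range := φ.range.fg_iff_finiteType.1 hφ
  rw [ker_sdhypConeCoordEval, ringKrullDim_eq_of_ringEquiv
      (Ideal.quotientKerEquivRange φ).toRingEquiv, Nat.add_sub_cancel, ← card_sliceCoord]
  exact ringKrullDim_eq_of_trdeg k _
    (le_antisymm (trdeg_range_coeffHom_le k (by omega)) (le_trdeg_range_coeffHom k (by omega)))
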